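/- arXiv:2004.12005 — 2 statements merged into one kernel-verified Lean document; each statement's English description precedes it below -/
import Mathlib

section
/- Let M ≤ N be integers, γ a measure on ℤ with mass function q positive on a contiguous support containing ⟦M,N⟧, h : ⟦M,N⟧ → ℝ an arbitrary function, and Φ a convex real-valued function on the set 𝒫ₕᵞ(⟦M,N⟧) of probability distributions supported on ⟦M,N⟧ that are log-concave with respect to γ and satisfy E[h(X)] ≥ 0. Then the supremum of Φ over 𝒫ₕᵞ(⟦M,N⟧) is at most the supremum of Φ over the subset of distributions in 𝒫ₕᵞ(⟦M,N⟧) whose p.m.f. with respect to γ has the log-affine form f(n) = C·pⁿ·1_{⟦k,l⟧}(n) for some C, p > 0 and integers M ≤ k ≤ l ≤ N. -/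
/-- The support of `f : ℤ → ℝ` is contiguous. -/
def ContigSupportInt (f : ℤ → ℝ) : Prop :=
  ∀ a b c : ℤ, a ≤ b → b ≤ c → 0 < f a → 0 < f c → 0 < f b

/-- A p.m.f. `p` is log-concave with respect to the reference mass function `q`. -/
def IsLogConcaveWrt (q p : ℤ → ℝ) : Prop :=
  (∀ n : ℤ, (p (n - 1) / q (n - 1)) * (p (n + 1) / q (n + 1)) ≤ (p n / q n) ^ 2) ∧
    ContigSupportInt (fun n => p n / q n)

/-- `𝒫ₕᵞ(⟦M,N⟧)`: probability mass functions supported on `⟦M,N⟧`, log-concave with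
respect to `q`, with `E[h(X)] ≥ 0`. -/
def LCPmfSet (q : ℤ → ℝ) (M N : ℤ) (h : ℤ → ℝ) : Set (ℤ → ℝ) :=
  { p | (∀ n, 0 ≤ p n) ∧ (∀ n : ℤ, n ∉ Finset.Icc M N → p n = 0) ∧
      (∑ n ∈ Finset.Icc M N, p n) = 1 ∧ IsLogConcaveWrt q p ∧
      0 ≤ ∑ n ∈ Finset.Icc M N, h n * p n }

/-- The members of `𝒫ₕᵞ(⟦M,N⟧)` whose p.m.f. with respect to `γ` is of the truncated
log-affine form `C·ρⁿ·1_{⟦k,l⟧}(n)`. -/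
def LAPmfSet (q : ℤ → ℝ) (M N : ℤ) (h : ℤ → ℝ) : Set (ℤ → ℝ) :=
  LCPmfSet q M N h ∩
    { p | ∃ C : ℝ, 0 < C ∧ ∃ ρ : ℝ, 0 < ρ ∧ ∃ k l : ℤ, M ≤ k ∧ k ≤ l ∧ l ≤ N ∧
      ∀ n : ℤ, p n / q n = if k ≤ n ∧ n ≤ l then C * ρ ^ n else 0 }

/-- The convex hull of a compact set in a finite dimensional space is compact. -/
lemma aux_compact_hull_fin {E : Type*} [NormedAddCommGroup E] [NormedSpace ℝ E]
    [FiniteDimensional ℝ E] (S : Set E) (hS : IsCompact S) : IsCompact (convexHull ℝ S) := by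
  classical
  rcases S.eq_empty_or_nonempty with rfl | ⟨s₀, hs₀⟩
  · simp
  let d := Module.finrank ℝ E + 1
  let F : (Fin d → ℝ) × (Fin d → E) → E := fun x => ∑ i, x.1 i • x.2 i
  have hF : Continuous F := by fun_prop
  have hc : IsCompact (stdSimplex ℝ (Fin d) ×ˢ (Set.univ.pi fun _ : Fin d => S)) :=
    (isCompact_stdSimplex ℝ (Fin d)).prod (isCompact_univ_pi fun _ => hS)
  have heq : convexHull ℝ S =
      F '' (stdSimplex ℝ (Fin d) ×ˢ (Set.univ.pi fun _ : Fin d => S)) := by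
    apply Set.Subset.antisymm
    · intro x hx
      obtain ⟨ι, _, z, w, hz, hind, hw, hw1, hx⟩ := eq_pos_convex_span_of_mem_convexHull hx
      have hcard : Fintype.card ι ≤ Fintype.card (Fin d) := by
        have h1 := hind.card_le_finrank_succ
        have h2 := Submodule.finrank_le (vectorSpan ℝ (Set.range z))
        simp only [Fintype.card_fin, d]
        omega
      obtain ⟨e⟩ := Function.Embedding.nonempty_of_card_le hcard
      have hsum : ∀ {V : Type _} [AddCommMonoid V] (u : Fin d → V),
          (∀ j, j ∉ Set.range e → u j = 0) → ∑ j, u j = ∑ i, u (e i) := by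
        intro V _ u hu
        rw [← Finset.sum_map Finset.univ e u]
        symm
        apply Finset.sum_subset (Finset.subset_univ _)
        intro j _ hj
        apply hu
        simpa using hj
      have hwe : ∀ i, Function.extend e w 0 (e i) = w i := fun i => e.injective.extend_apply _ _ _
      have hze : ∀ i, Function.extend e z (fun _ => s₀) (e i) = z i :=
        fun i => e.injective.extend_apply _ _ _
      have hwo : ∀ j, j ∉ Set.range e → Function.extend e w 0 j = 0 := fun j hj =>
        Function.extend_apply' _ _ _ hj
      have hzo : ∀ j, j ∉ Set.range e → Function.extend e z (fun _ => s₀) j = s₀ := fun j hj =>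
        Function.extend_apply' _ _ _ hj
      refine ⟨(Function.extend e w 0, Function.extend e z (fun _ => s₀)), ⟨⟨?_, ?_⟩, ?_⟩, ?_⟩
      · intro j
        by_cases hj : j ∈ Set.range e
        · obtain ⟨i, rfl⟩ := hj
          simp only [hwe]; exact (hw i).le
        · simp only [hwo j hj]; exact le_rfl
      · simp only
        rw [hsum _ hwo]; simp only [hwe, hw1]
      · intro j _
        by_cases hj : j ∈ Set.range e
        · obtain ⟨i, rfl⟩ := hj
          simp only [hze]; exact hz ⟨i, rfl⟩
        · simp only [hzo j hj]; exact hs₀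
      · simp only [F]
        rw [← Finset.sum_subset (Finset.subset_univ (Finset.univ.map e))]
        · rw [Finset.sum_map]; simp only [hwe, hze, hx]
        · intro j _ hj
          rw [hwo j (by simpa using hj), zero_smul]
    · rintro _ ⟨⟨w, z⟩, ⟨⟨hw0, hw1⟩, hz⟩, rfl⟩
      exact mem_convexHull_of_exists_fintype w z hw0 hw1 (fun i => hz i trivial) rfl
  rw [heq]
  exact hc.image hF

lemma aux_compact_hull (M N : ℤ) (S : Set (ℤ → ℝ)) (hS : IsCompact S)
    (h0 : ∀ p ∈ S, ∀ n : ℤ, n ∉ Finset.Icc M N → p n = 0) :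
    IsCompact (convexHull ℝ S) := by
  classical
  let R : (ℤ → ℝ) → ({x // x ∈ Finset.Icc M N} → ℝ) := fun p i => p i
  have hR : Continuous R := by fun_prop
  let E : ({x // x ∈ Finset.Icc M N} → ℝ) →ₗ[ℝ] (ℤ → ℝ) :=
    { toFun := fun v n => if hn : n ∈ Finset.Icc M N then v ⟨n, hn⟩ else 0
      map_add' := by
        intro x y; ext n; simp only [Pi.add_apply]; split_ifs <;> simp
      map_smul' := by
        intro x y; ext n; simp only [Pi.smul_apply, RingHom.id_apply]; split_ifs <;> simp }
  have hE : Continuous E := E.continuous_of_finiteDimensional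
  have h1 : E '' (R '' S) = S := by
    rw [Set.image_image]
    have : ∀ p ∈ S, E (R p) = p := by
      intro p hp
      ext n
      by_cases hn : n ∈ Finset.Icc M N
      · simp only [E, R, LinearMap.coe_mk, AddHom.coe_mk, dif_pos hn]
      · simp only [E, R, LinearMap.coe_mk, AddHom.coe_mk, dif_neg hn, h0 p hp n hn]
    rw [Set.image_congr this]
    simp
  rw [← h1, ← LinearMap.image_convexHull]
  exact (aux_compact_hull_fin _ (hS.image hR)).image hE

/-- Four point inequality. -/
lemma aux_four (f : ℤ → ℝ) (hf : ∀ n, 0 ≤ f n)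
    (hlc : ∀ n : ℤ, f (n - 1) * f (n + 1) ≤ f n ^ 2) (hc : ContigSupportInt f)
    (a c : ℤ) (hac : a < c) : f a * f c ≤ f (a + 1) * f (c - 1) := by
  have key : ∀ c, a + 1 ≤ c → 0 < f a → 0 < f c → f a * f c ≤ f (a + 1) * f (c - 1) := by
    intro c hc1
    induction c, hc1 using Int.leInduction with
    | base => intro _ _; simp [mul_comm]
    | succ m hm ih =>
      intro ha hm1
      have hmp : 0 < f m := hc a m (m + 1) (by omega) (by omega) ha hm1
      have hmm : 0 < f (m - 1) := hc a (m - 1) (m + 1) (by omega) (by omega) ha hm1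
      have h1 := ih ha hmp
      have h2 := hlc m
      simp only [add_sub_cancel_right]
      have h3 : f a * f (m + 1) * f (m - 1) ≤ f (a + 1) * f m * f (m - 1) := by nlinarith
      exact le_of_mul_le_mul_right h3 hmm
  rcases (hf a).eq_or_lt with h0 | h0
  · rw [← h0, zero_mul]; exact mul_nonneg (hf _) (hf _)
  rcases (hf c).eq_or_lt with h1 | h1
  · rw [← h1, mul_zero]; exact mul_nonneg (hf _) (hf _)
  exact key c hac h0 h1

lemma aux_contig (f : ℤ → ℝ) (hf : ∀ n, 0 ≤ f n)
    (h4 : ∀ a c : ℤ, a < c → f a * f c ≤ f (a + 1) * f (c - 1)) : ContigSupportInt f := by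
  intro a b c hab hbc ha hc
  revert hbc
  induction b, hab using Int.leInduction with
  | base => intro _; exact ha
  | succ m hm ih =>
    intro hmc
    have h1 := ih (by omega)
    have h2 := h4 m c (by omega)
    rcases (hf (m + 1)).eq_or_lt with h0 | h0
    · rw [← h0, zero_mul] at h2
      nlinarith [mul_pos h1 hc]
    · exact h0

lemma aux_set_eq (q : ℤ → ℝ) (hq0 : ∀ n, 0 ≤ q n) (M N : ℤ) (h : ℤ → ℝ) :
    LCPmfSet q M N h = { p | (∀ n, 0 ≤ p n) ∧ (∀ n : ℤ, n ∉ Finset.Icc M N → p n = 0) ∧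
      (∑ n ∈ Finset.Icc M N, p n) = 1 ∧
      (∀ a c : ℤ, a < c → p a / q a * (p c / q c) ≤
        p (a + 1) / q (a + 1) * (p (c - 1) / q (c - 1))) ∧
      0 ≤ ∑ n ∈ Finset.Icc M N, h n * p n } := by
  ext p
  constructor
  · rintro ⟨h1, h2, h3, h4, h5⟩
    exact ⟨h1, h2, h3, aux_four (fun n => p n / q n) (fun n => div_nonneg (h1 n) (hq0 n))
      h4.1 h4.2, h5⟩
  · rintro ⟨h1, h2, h3, h4, h5⟩
    refine ⟨h1, h2, h3, ⟨?_, aux_contig (fun n => p n / q n)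
      (fun n => div_nonneg (h1 n) (hq0 n)) h4⟩, h5⟩
    intro n
    have := h4 (n - 1) (n + 1) (by omega)
    simpa [pow_two] using this

lemma aux_compact (q : ℤ → ℝ) (hq0 : ∀ n, 0 ≤ q n) (M N : ℤ) (h : ℤ → ℝ) :
    IsCompact (LCPmfSet q M N h) := by
  have hcl : IsClosed (LCPmfSet q M N h) := by
    rw [aux_set_eq q hq0]
    simp only [Set.ofPred_and, Set.ofPred_forall]
    refine IsClosed.inter ?_ (IsClosed.inter ?_ (IsClosed.inter ?_ (IsClosed.inter ?_ ?_)))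
    · exact isClosed_iInter fun n => isClosed_le (by fun_prop) (by fun_prop)
    · exact isClosed_iInter fun n => isClosed_iInter fun _ =>
        isClosed_eq (by fun_prop) (by fun_prop)
    · exact isClosed_eq (by fun_prop) (by fun_prop)
    · exact isClosed_iInter fun a => isClosed_iInter fun c => isClosed_iInter fun _ =>
        isClosed_le (by fun_prop) (by fun_prop)
    · exact isClosed_le (by fun_prop) (by fun_prop)
  have hbig : IsCompact (Set.univ.pi fun _ : ℤ => Set.Icc (0 : ℝ) 1) :=
    isCompact_univ_pi fun _ => isCompact_Icc
  refine hbig.of_isClosed_subset hcl ?_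
  rintro p ⟨h1, h2, h3, -, -⟩ n -
  refine ⟨h1 n, ?_⟩
  by_cases hn : n ∈ Finset.Icc M N
  · rw [← h3]
    exact Finset.single_le_sum (f := p) (fun i _ => h1 i) hn
  · rw [h2 n hn]; exact zero_le_one

/-- The closed polynomial condition for being log-affine on the support. -/
def auxLA (q : ℤ → ℝ) : Set (ℤ → ℝ) :=
  { p | ∀ n : ℤ, p (n - 1) / q (n - 1) * (p (n + 1) / q (n + 1)) *
    ((p n / q n) ^ 2 - p (n - 1) / q (n - 1) * (p (n + 1) / q (n + 1))) = 0 }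

lemma auxLA_closed (q : ℤ → ℝ) : IsClosed (auxLA q) := by
  unfold auxLA
  simp only [Set.ofPred_forall]
  exact isClosed_iInter fun n => isClosed_eq (by fun_prop) (by fun_prop)

lemma auxLA_subset (q : ℤ → ℝ) (hq0 : ∀ n, 0 ≤ q n) (M N : ℤ)
    (hqpos : ∀ n ∈ Finset.Icc M N, 0 < q n) (h : ℤ → ℝ) :
    LCPmfSet q M N h ∩ auxLA q ⊆ LAPmfSet q M N h := by
  rintro p ⟨hp, hA⟩
  refine ⟨hp, ?_⟩
  obtain ⟨h1, h2, h3, ⟨-, hc⟩, -⟩ := hp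
  set f : ℤ → ℝ := fun n => p n / q n with hf
  have hf0 : ∀ n, 0 ≤ f n := fun n => div_nonneg (h1 n) (hq0 n)
  have hout : ∀ n, n ∉ Finset.Icc M N → f n = 0 := fun n hn => by simp [hf, h2 n hn]
  let s := (Finset.Icc M N).filter fun n => 0 < f n
  have hs : s.Nonempty := by
    by_contra hne
    rw [Finset.not_nonempty_iff_eq_empty] at hne
    have : ∑ n ∈ Finset.Icc M N, p n = 0 := by
      refine Finset.sum_eq_zero fun n hn => ?_
      by_contra hpn
      have : n ∈ s := Finset.mem_filter.2
        ⟨hn, div_pos (lt_of_le_of_ne (h1 n) (Ne.symm hpn)) (hqpos n hn)⟩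
      simp [hne] at this
    linarith
  let k := s.min' hs
  let l := s.max' hs
  have hk := Finset.mem_filter.1 (s.min'_mem hs)
  have hl := Finset.mem_filter.1 (s.max'_mem hs)
  have hkl : k ≤ l := s.min'_le _ (s.max'_mem hs)
  have hkf : 0 < f k := hk.2
  have hlf : 0 < f l := hl.2
  have hpos : ∀ n, k ≤ n → n ≤ l → 0 < f n := fun n hkn hnl => hc k n l hkn hnl hkf hlf
  have hzero : ∀ n, ¬ (k ≤ n ∧ n ≤ l) → f n = 0 := by
    intro n hn
    by_contra hne
    apply hn
    have hpn : 0 < f n := lt_of_le_of_ne (hf0 n) (Ne.symm hne)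
    have hI : n ∈ Finset.Icc M N := by
      by_contra hI; exact hne (hout n hI)
    have hm : n ∈ s := Finset.mem_filter.2 ⟨hI, hpn⟩
    exact ⟨s.min'_le _ hm, s.le_max' _ hm⟩
  obtain ⟨ρ, hρ, hρ1⟩ : ∃ ρ : ℝ, 0 < ρ ∧ (k < l → f (k + 1) = ρ * f k) := by
    by_cases hlt : k < l
    · refine ⟨f (k + 1) / f k, div_pos (hpos _ (by omega) (by omega)) hkf, fun _ => ?_⟩
      field_simp
    · exact ⟨1, one_pos, fun h => absurd h hlt⟩
  have hstep : ∀ n, k ≤ n → n < l → f (n + 1) = ρ * f n := by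
    intro n hn
    induction n, hn using Int.leInduction with
    | base => exact hρ1
    | succ m hm ih =>
      intro hml
      have e1 := ih (by omega)
      have e2 := hA (m + 1)
      rw [add_sub_cancel_right] at e2
      change f m * f (m + 1 + 1) * (f (m + 1) ^ 2 - f m * f (m + 1 + 1)) = 0 at e2
      have p1 := hpos m hm (by omega)
      have p2 := hpos (m + 1 + 1) (by omega) (by omega)
      have p3 := hpos (m + 1) (by omega) (by omega)
      have e3 : f (m + 1) ^ 2 - f m * f (m + 1 + 1) = 0 := by
        rcases mul_eq_zero.1 e2 with e | e
        · exact absurd e (mul_pos p1 p2).ne'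
        · exact e
      apply mul_left_cancel₀ p1.ne'
      linear_combination (-1 : ℝ) * e3 + f (m + 1) * e1
  have hform : ∀ n, k ≤ n → n ≤ l → f n = f k / ρ ^ k * ρ ^ n := by
    intro n hn
    induction n, hn using Int.leInduction with
    | base => intro _; field_simp
    | succ m hm ih =>
      intro hml
      rw [hstep m hm (by omega), ih (by omega), zpow_add_one₀ hρ.ne']
      ring
  refine ⟨f k / ρ ^ k, by positivity, ρ, hρ, k, l, (Finset.mem_Icc.1 hk.1).1, hkl,
    (Finset.mem_Icc.1 hl.1).2, fun n => ?_⟩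
  split_ifs with hn
  · exact hform n hn.1 hn.2
  · exact hzero n hn

lemma aux_kernel (A B C A' B' C' : ℝ) : ∃ a b c : ℝ, (a ≠ 0 ∨ b ≠ 0 ∨ c ≠ 0) ∧
    a * A + b * B + c * C = 0 ∧ a * A' + b * B' + c * C' = 0 := by
  let T : (Fin 3 → ℝ) →ₗ[ℝ] (Fin 2 → ℝ) := Matrix.mulVecLin !![A, B, C; A', B', C']
  have hT : LinearMap.ker T ≠ ⊥ := LinearMap.ker_ne_bot_of_finrank_lt (by simp)
  obtain ⟨v, hv, hv0⟩ := (Submodule.ne_bot_iff _).1 hT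
  refine ⟨v 0, v 1, v 2, ?_, ?_, ?_⟩
  · by_contra hcon
    push Not at hcon
    apply hv0
    ext i
    fin_cases i
    · exact hcon.1
    · exact hcon.2.1
    · exact hcon.2.2
  · have := congrFun (LinearMap.mem_ker.1 hv) 0
    simp [T, Matrix.mulVec, dotProduct, Fin.sum_univ_three] at this
    linarith
  · have := congrFun (LinearMap.mem_ker.1 hv) 1
    simp [T, Matrix.mulVec, dotProduct, Fin.sum_univ_three] at this
    linarith

open Filter Topology in
lemma aux_perturb (q : ℤ → ℝ) (hq0 : ∀ n, 0 ≤ q n) (M N : ℤ) (h : ℤ → ℝ)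
    (p : ℤ → ℝ) (hp : p ∈ LCPmfSet q M N h) (n₀ : ℤ) (g : ℤ → ℝ)
    (hg : ∀ n, n ≠ n₀ → g (n - 1) + g (n + 1) = 2 * g n)
    (hst : p (n₀ - 1) / q (n₀ - 1) * (p (n₀ + 1) / q (n₀ + 1)) < (p n₀ / q n₀) ^ 2)
    (hs1 : ∑ n ∈ Finset.Icc M N, p n * g n = 0)
    (hs2 : ∑ n ∈ Finset.Icc M N, h n * (p n * g n) = 0) :
    ∀ᶠ t : ℝ in 𝓝 0, (fun n => p n * (1 + t * g n)) ∈ LCPmfSet q M N h := by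
  have e1 : ∀ᶠ t : ℝ in 𝓝 0, ∀ n ∈ Finset.Icc M N, 0 < 1 + t * g n := by
    rw [Filter.eventually_all_finset]
    intro n _
    have hcont : Continuous fun t : ℝ => 1 + t * g n := by fun_prop
    exact (hcont.tendsto 0).eventually_const_lt (by simp)
  have e2 : ∀ᶠ t : ℝ in 𝓝 0,
      p (n₀ - 1) * (1 + t * g (n₀ - 1)) / q (n₀ - 1) *
        (p (n₀ + 1) * (1 + t * g (n₀ + 1)) / q (n₀ + 1)) <
      (p n₀ * (1 + t * g n₀) / q n₀) ^ 2 := by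
    have c1 : Continuous fun t : ℝ => p (n₀ - 1) * (1 + t * g (n₀ - 1)) / q (n₀ - 1) *
        (p (n₀ + 1) * (1 + t * g (n₀ + 1)) / q (n₀ + 1)) := by fun_prop
    have c2 : Continuous fun t : ℝ => (p n₀ * (1 + t * g n₀) / q n₀) ^ 2 := by fun_prop
    exact (c1.tendsto 0).eventually_lt (c2.tendsto 0) (by simpa using hst)
  obtain ⟨h1, h2, h3, ⟨hlc, hc⟩, h5⟩ := hp
  filter_upwards [e1, e2] with t ht ht2
  have hI : ∀ n, p n ≠ 0 → n ∈ Finset.Icc M N := fun n hn => by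
    by_contra hcon; exact hn (h2 n hcon)
  have hnn : ∀ n, 0 ≤ p n * (1 + t * g n) := by
    intro n
    by_cases hn : n ∈ Finset.Icc M N
    · exact mul_nonneg (h1 n) (ht n hn).le
    · simp [h2 n hn]
  refine ⟨hnn, fun n hn => by simp [h2 n hn], ?_, ⟨?_, ?_⟩, ?_⟩
  · have : ∀ n, p n * (1 + t * g n) = p n + t * (p n * g n) := fun n => by ring
    simp only [this, Finset.sum_add_distrib, ← Finset.mul_sum, h3, hs1]
    simp
  · intro n
    by_cases hn : n = n₀
    · subst hn; exact ht2.le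
    by_cases hz : p (n - 1) = 0
    · simp only [hz, zero_mul, zero_div]; positivity
    by_cases hz' : p (n + 1) = 0
    · simp only [hz', zero_mul, zero_div, mul_zero]; positivity
    have i1 := ht _ (hI _ hz)
    have i2 := ht _ (hI _ hz')
    have hg' := hg n hn
    have i3 : (1 + t * g (n - 1)) * (1 + t * g (n + 1)) ≤ (1 + t * g n) ^ 2 := by
      have : 1 + t * g n = ((1 + t * g (n - 1)) + (1 + t * g (n + 1))) / 2 := by
        linear_combination (-t / 2) * hg'
      rw [this]
      nlinarith [sq_nonneg ((1 + t * g (n - 1)) - (1 + t * g (n + 1)))]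
    calc p (n - 1) * (1 + t * g (n - 1)) / q (n - 1) *
          (p (n + 1) * (1 + t * g (n + 1)) / q (n + 1))
        = (p (n - 1) / q (n - 1) * (p (n + 1) / q (n + 1))) *
          ((1 + t * g (n - 1)) * (1 + t * g (n + 1))) := by ring
      _ ≤ (p n / q n) ^ 2 * (1 + t * g n) ^ 2 :=
          mul_le_mul (hlc n) i3 (mul_pos i1 i2).le (sq_nonneg _)
      _ = (p n * (1 + t * g n) / q n) ^ 2 := by ring
  · have hiff : ∀ n, 0 < p n * (1 + t * g n) / q n ↔ 0 < p n / q n := by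
      intro n
      by_cases hz : p n = 0
      · simp [hz]
      have i1 := ht _ (hI _ hz)
      rw [show p n * (1 + t * g n) / q n = p n / q n * (1 + t * g n) by ring]
      exact mul_pos_iff_of_pos_right i1
    intro a b c hab hbc ha hcc
    exact (hiff b).2 (hc a b c hab hbc ((hiff a).1 ha) ((hiff c).1 hcc))
  · have : ∀ n, h n * (p n * (1 + t * g n)) = h n * p n + t * (h n * (p n * g n)) :=
      fun n => by ring
    simp only [this, Finset.sum_add_distrib, ← Finset.mul_sum, hs2]
    simpa using h5

open Filter Topology in
lemma aux_extreme (q : ℤ → ℝ) (hq0 : ∀ n, 0 ≤ q n) (M N : ℤ) (h : ℤ → ℝ)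
    (p : ℤ → ℝ) (hp : p ∈ LCPmfSet q M N h)
    (hpe : p ∈ (convexHull ℝ (LCPmfSet q M N h)).extremePoints ℝ) : p ∈ auxLA q := by
  intro n₀
  by_contra hne
  have hne1 := left_ne_zero_of_mul hne
  have hne2 := right_ne_zero_of_mul hne
  have hlc := hp.2.2.2.1.1 n₀
  have hst : p (n₀ - 1) / q (n₀ - 1) * (p (n₀ + 1) / q (n₀ + 1)) < (p n₀ / q n₀) ^ 2 :=
    lt_of_le_of_ne hlc fun e => hne2 (by rw [e, sub_self])
  have q1 : p (n₀ - 1) ≠ 0 := fun e => hne1 (by simp [e])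
  have q2 : p (n₀ + 1) ≠ 0 := fun e => hne1 (by simp [e])
  have q3 : p n₀ ≠ 0 := by
    intro e
    have a1 := mul_nonneg (div_nonneg (hp.1 (n₀ - 1)) (hq0 (n₀ - 1)))
      (div_nonneg (hp.1 (n₀ + 1)) (hq0 (n₀ + 1)))
    rw [e] at hst
    simp only [zero_div, ne_eq, OfNat.ofNat_ne_zero, not_false_eq_true, zero_pow] at hst
    linarith
  obtain ⟨a, b, c, habc, s1, s2⟩ := aux_kernel
    (∑ n ∈ Finset.Icc M N, p n) (∑ n ∈ Finset.Icc M N, p n * ((n - n₀ : ℤ) : ℝ))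
    (∑ n ∈ Finset.Icc M N, p n * ((max (n - n₀) 0 : ℤ) : ℝ))
    (∑ n ∈ Finset.Icc M N, h n * p n) (∑ n ∈ Finset.Icc M N, h n * (p n * ((n - n₀ : ℤ) : ℝ)))
    (∑ n ∈ Finset.Icc M N, h n * (p n * ((max (n - n₀) 0 : ℤ) : ℝ)))
  let g : ℤ → ℝ := fun n => a + b * ((n - n₀ : ℤ) : ℝ) + c * ((max (n - n₀) 0 : ℤ) : ℝ)
  have hg : ∀ n, n ≠ n₀ → g (n - 1) + g (n + 1) = 2 * g n := by
    intro n hn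
    have e : (max (n - 1 - n₀) 0 : ℤ) + max (n + 1 - n₀) 0 = 2 * max (n - n₀) 0 := by omega
    have e' : ((max (n - 1 - n₀) 0 : ℤ) : ℝ) + ((max (n + 1 - n₀) 0 : ℤ) : ℝ)
        = 2 * ((max (n - n₀) 0 : ℤ) : ℝ) := by exact_mod_cast e
    have e'' : ((n - 1 - n₀ : ℤ) : ℝ) + ((n + 1 - n₀ : ℤ) : ℝ)
        = 2 * ((n - n₀ : ℤ) : ℝ) := by push_cast; ring
    simp only [g]
    linear_combination c * e' + b * e''
  have hs1 : ∑ n ∈ Finset.Icc M N, p n * g n = 0 := by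
    rw [← s1]
    simp only [Finset.mul_sum, ← Finset.sum_add_distrib]
    exact Finset.sum_congr rfl fun n _ => by simp only [g]; ring
  have hs2 : ∑ n ∈ Finset.Icc M N, h n * (p n * g n) = 0 := by
    rw [← s2]
    simp only [Finset.mul_sum, ← Finset.sum_add_distrib]
    exact Finset.sum_congr rfl fun n _ => by simp only [g]; ring
  have hev := aux_perturb q hq0 M N h p hp n₀ g hg hst hs1 hs2
  obtain ⟨δ, hδ, hball⟩ := Metric.eventually_nhds_iff.1 hev
  have m1 := hball (y := δ / 2) (by simp [abs_of_pos hδ, hδ])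
  have m2 := hball (y := -(δ / 2)) (by simp [abs_of_pos hδ, hδ])
  have heq := hpe.2 (subset_convexHull ℝ _ m1) (subset_convexHull ℝ _ m2)
    ⟨1 / 2, 1 / 2, by norm_num, by norm_num, by norm_num, by
      ext n; simp only [Pi.add_apply, Pi.smul_apply, smul_eq_mul]; ring⟩
  have gz : ∀ n, p n ≠ 0 → g n = 0 := by
    intro n hn
    have e := congrFun heq n
    have e2 : p n * (δ / 2) * g n = 0 := by
      linear_combination e
    rcases mul_eq_zero.1 e2 with e3 | e3
    · rcases mul_eq_zero.1 e3 with e4 | e4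
      · exact absurd e4 hn
      · linarith
    · exact e3
  have g0 := gz n₀ q3
  have g1 := gz _ q1
  have g2 := gz _ q2
  simp [g] at g0 g1 g2
  rcases habc with h | h | h
  · exact h g0
  · apply h; linarith
  · apply h; linarith

lemma aux_hull (q : ℤ → ℝ) (hq0 : ∀ n, 0 ≤ q n) (M N : ℤ)
    (hqpos : ∀ n ∈ Finset.Icc M N, 0 < q n) (h : ℤ → ℝ) :
    LCPmfSet q M N h ⊆ convexHull ℝ (LAPmfSet q M N h) := by
  have hK := aux_compact q hq0 M N h
  have hKc := aux_compact_hull M N _ hK fun p hp => hp.2.1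
  have hLc := aux_compact_hull M N _ (hK.inter_right (auxLA_closed q)) fun p hp => hp.1.2.1
  intro p hp
  have hp' : p ∈ convexHull ℝ (LCPmfSet q M N h) := subset_convexHull ℝ _ hp
  rw [← closure_convexHull_extremePoints hKc (convex_convexHull ℝ _)] at hp'
  refine convexHull_mono (auxLA_subset q hq0 M N hqpos h) ?_
  rw [← hLc.isClosed.closure_eq]
  refine closure_mono (convexHull_mono ?_) hp'
  intro x hx
  have hxK := extremePoints_convexHull_subset hx
  exact ⟨hxK, aux_extreme q hq0 M N h x hxK hx⟩

/-- A convex function on `𝒫ₕᵞ(⟦M,N⟧)` is maximized over distributions whose p.m.f.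
with respect to `γ` is log-affine on a segment. -/
theorem sSup_convex_le_sSup_logAffine (M N : ℤ) (hMN : M ≤ N)
    (q : ℤ → ℝ) (hq0 : ∀ n, 0 ≤ q n) (hqc : ContigSupportInt q)
    (hqpos : ∀ n ∈ Finset.Icc M N, 0 < q n)
    (h : ℤ → ℝ) (Φ : (ℤ → ℝ) → ℝ)
    (hΦ : ConvexOn ℝ (convexHull ℝ (LCPmfSet q M N h)) Φ) :
    sSup (Φ '' LCPmfSet q M N h) ≤ sSup (Φ '' LAPmfSet q M N h) := by
  have hhull := aux_hull q hq0 M N hqpos h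
  have hsub : LAPmfSet q M N h ⊆ LCPmfSet q M N h := Set.inter_subset_left
  have hmax : ∀ p ∈ LCPmfSet q M N h, ∃ y ∈ LAPmfSet q M N h, Φ p ≤ Φ y := fun p hp =>
    hΦ.exists_ge_of_mem_convexHull (hsub.trans (subset_convexHull ℝ _)) (hhull hp)
  by_cases hb : BddAbove (Φ '' LAPmfSet q M N h)
  · rcases (LCPmfSet q M N h).eq_empty_or_nonempty with he | hne
    · have he' : LAPmfSet q M N h = ∅ := Set.subset_empty_iff.1 (he ▸ hsub)
      rw [he, he']
    · refine csSup_le (hne.image Φ) ?_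
      rintro _ ⟨p, hp, rfl⟩
      obtain ⟨y, hy, hpy⟩ := hmax p hp
      exact hpy.trans (le_csSup hb ⟨y, hy, rfl⟩)
  · have hb' : ¬ BddAbove (Φ '' LCPmfSet q M N h) := fun hB =>
      hb (hB.mono (Set.image_mono hsub))
    rw [Real.sSup_of_not_bddAbove hb, Real.sSup_of_not_bddAbove hb']
end

section
/- (Dilation inequality) Let μ be a log-concave probability measure on ℤ, let K ⊆ ℤ be a (possibly infinite) interval, and let A ⊆ K. For δ ∈ (0,1), define A_δ = { z ∈ A : |A ∩ Δ_z| ≥ (1−δ)·|Δ_z| for every interval Δ ⊆ K containing z }, where Δ_z = Δ \ {z} and |·| denotes cardinality. Then μ(A) ≥ μ(A_δ)^δ · μ(K)^{1−δ}. -/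
/-- `p` is the p.m.f. of a log-concave probability measure on `ℤ`. -/
def IsLogConcavePMF (p : ℤ → ℝ) : Prop :=
  (∀ n, 0 ≤ p n) ∧ Summable p ∧ (∑' n : ℤ, p n) = 1 ∧
    (∀ n : ℤ, p (n - 1) * p (n + 1) ≤ p n ^ 2) ∧ ContigSupportInt p

/-- `S ⊆ ℤ` is an interval: `z₁ ≤ z₂ ≤ z₃` with `z₁, z₃ ∈ S` implies `z₂ ∈ S`. -/
def IsIntervalZ (S : Set ℤ) : Prop :=
  ∀ a b c : ℤ, a ≤ b → b ≤ c → a ∈ S → c ∈ S → b ∈ S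

/-- The measure of a set `S ⊆ ℤ` under the p.m.f. `p`. -/
noncomputable def measOf (p : ℤ → ℝ) (S : Set ℤ) : ℝ :=
  ∑' n : ℤ, S.indicator p n

/-- The `δ`-interior `A_δ` of `A` relative to the interval `K`:
points `z ∈ A` such that `|A ∩ Δ_z| ≥ (1−δ)·|Δ_z|` for every interval `Δ ⊆ K`
containing `z`, where `Δ_z = Δ \ {z}`. -/
def dilationInterior (K A : Set ℤ) (δ : ℝ) : Set ℤ :=
  { z ∈ A | ∀ Δ : Set ℤ, IsIntervalZ Δ → Δ.Finite → Δ ⊆ K → z ∈ Δ →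
      (1 - δ) * ((Δ \ {z}).ncard : ℝ) ≤ ((A ∩ (Δ \ {z})).ncard : ℝ) }

/-- Strong (closed) form of log-concavity on `ℤ`. -/
def StrongLC (p : ℤ → ℝ) : Prop :=
  ∀ a b : ℤ, a ≤ b → p a * p (b + 1) ≤ p (a + 1) * p b

lemma strongLC_of_local {p : ℤ → ℝ} (h0 : ∀ n, 0 ≤ p n)
    (hl : ∀ n : ℤ, p (n - 1) * p (n + 1) ≤ p n ^ 2) (hc : ContigSupportInt p) :
    StrongLC p := by
  intro a b hab
  induction b, hab using Int.leInduction with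
  | base => rw [mul_comm]
  | succ b hab ih =>
    rcases (h0 a).eq_or_lt with h | ha
    · rw [← h, zero_mul]; exact mul_nonneg (h0 _) (h0 _)
    rcases (h0 (b + 1 + 1)).eq_or_lt with h | hb2
    · rw [← h, mul_zero]; exact mul_nonneg (h0 _) (h0 _)
    have hb : 0 < p b := hc a b (b + 1 + 1) hab (by omega) ha hb2
    have h1 := hl (b + 1)
    rw [show b + 1 - 1 = b by ring] at h1
    have h2 : p a * (p b * p (b + 1 + 1)) ≤ p a * p (b + 1) ^ 2 :=
      mul_le_mul_of_nonneg_left h1 ha.le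
    have h3 : p a * p (b + 1) * p (b + 1) ≤ p (a + 1) * p b * p (b + 1) :=
      mul_le_mul_of_nonneg_right ih (h0 _)
    refine le_of_mul_le_mul_right ?_ hb
    nlinarith

lemma StrongLC.locally_lc {p : ℤ → ℝ} (h : StrongLC p) (n : ℤ) :
    p (n - 1) * p (n + 1) ≤ p n ^ 2 := by
  have := h (n - 1) n (by omega)
  rw [sub_add_cancel] at this
  rw [pow_two]; exact this

lemma StrongLC.contig {p : ℤ → ℝ} (h0 : ∀ n, 0 ≤ p n) (h : StrongLC p) :
    ContigSupportInt p := by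
  intro a b c hab hbc ha hc
  induction b, hab using Int.leInduction with
  | base => exact ha
  | succ b hab ih =>
    have hb := ih (by omega)
    have h1 := h b (c - 1) (by omega)
    rw [sub_add_cancel] at h1
    have h2 : 0 < p b * p c := mul_pos hb hc
    rcases (h0 (b + 1)).eq_or_lt with h3 | h3
    · rw [← h3, zero_mul] at h1; linarith
    · exact h3

/-- Discrete concave sequences: chord inequality. -/
lemma concave_seq_chord (L : ℕ → ℝ) (N : ℕ)
    (hL : ∀ i, i + 2 ≤ N → L i + L (i + 2) ≤ 2 * L (i + 1)) (m : ℕ) (hm : m ≤ N) :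
    (m : ℝ) * (L N - L 0) ≤ N * (L m - L 0) := by
  have key : ∀ n : ℕ, n + 1 ≤ N → (n : ℝ) * (L (n + 1) - L n) ≤ L n - L 0 := by
    intro n
    induction n with
    | zero => intro _; simp
    | succ n ih =>
      intro hn
      have h1 := ih (by omega)
      have h2 := hL n (by omega)
      push_cast
      have h3 : L (n + 1 + 1) - L (n + 1) ≤ L (n + 1) - L n := by
        have : L (n + 2) = L (n + 1 + 1) := rfl
        linarith
      have h4 : ((n : ℝ) + 1) * (L (n + 1 + 1) - L (n + 1)) ≤
          ((n : ℝ) + 1) * (L (n + 1) - L n) :=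
        mul_le_mul_of_nonneg_left h3 (by positivity)
      linarith
  have main : ∀ n : ℕ, m ≤ n → n ≤ N → (m : ℝ) * (L n - L 0) ≤ n * (L m - L 0) := by
    intro n hmn
    induction n, hmn using Nat.le_induction with
    | base => intro _; exact le_rfl
    | succ n hmn ih =>
      intro hn
      have h1 := ih (by omega)
      have h2 := key n hn
      rcases Nat.eq_zero_or_pos n with h0 | h0
      · have : m = 0 := by omega
        subst this; simp
      have hn0 : (0 : ℝ) < n := by exact_mod_cast h0
      have hm0 : (0 : ℝ) ≤ m := by positivity
      refine le_of_mul_le_mul_left ?_ hn0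
      push_cast
      have h3 := mul_le_mul_of_nonneg_left h2 hm0
      have h4 := mul_le_mul_of_nonneg_left h1 (show (0 : ℝ) ≤ n + 1 by positivity)
      nlinarith
  exact main N hm le_rfl

/-- tails of a log-concave sequence are log-concave -/
lemma tail_lc {p : ℤ → ℝ} (h0 : ∀ n, 0 ≤ p n) (h : StrongLC p) (l n : ℤ) (hn : n + 2 ≤ l) :
    (∑ j ∈ Finset.Icc n l, p j) * (∑ j ∈ Finset.Icc (n + 2) l, p j) ≤
      (∑ j ∈ Finset.Icc (n + 1) l, p j) ^ 2 := by
  have e : ∀ a : ℤ, a ≤ l →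
      ∑ j ∈ Finset.Icc a l, p j = p a + ∑ j ∈ Finset.Icc (a + 1) l, p j := by
    intro a ha
    rw [← Finset.insert_Icc_add_one_left_eq_Icc ha, Finset.sum_insert (by simp)]
  have h1 : p n * (∑ j ∈ Finset.Icc (n + 2) l, p j) ≤
      p (n + 1) * ∑ j ∈ Finset.Icc (n + 1) l, p j := by
    have h2 : ∑ j ∈ Finset.Icc (n + 2) l, p j = ∑ j ∈ Finset.Icc (n + 1) (l - 1), p (j + 1) := by
      rw [show n + 2 = (n + 1) + 1 by ring]
      conv_lhs => rw [show l = (l - 1) + 1 by ring]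
      rw [← Finset.image_add_right_Icc, Finset.sum_image (by simp)]
    rw [h2, Finset.mul_sum, Finset.mul_sum]
    refine (Finset.sum_le_sum (g := fun j => p (n + 1) * p j) ?_).trans ?_
    · intro j hj
      rw [Finset.mem_Icc] at hj
      exact h n j (by omega)
    · refine Finset.sum_le_sum_of_subset_of_nonneg ?_ ?_
      · exact Finset.Icc_subset_Icc le_rfl (by omega)
      · intro i _ _; exact mul_nonneg (h0 _) (h0 _)
  have e1 := e n (by omega)
  have e2 := e (n + 1) (by omega)
  rw [show n + 1 + 1 = n + 2 by ring] at e2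
  have e3 := congrArg (fun t => (∑ j ∈ Finset.Icc (n + 1) l, p j) * t) e2
  rw [e1, pow_two]
  linarith

lemma tail_interp {p : ℤ → ℝ} (h0 : ∀ n, 0 ≤ p n) (h : StrongLC p) (k l z : ℤ) (hkz : k ≤ z)
    (hzl : z ≤ l) (hp : ∀ n, k ≤ n → n ≤ l → 0 < p n) (m : ℕ) (δ : ℝ) (hδ0 : 0 < δ)
    (hδ1 : δ < 1) (hm : (m : ℝ) ≤ δ * (z - k)) :
    (∑ j ∈ Finset.Icc z l, p j) ^ δ * (∑ j ∈ Finset.Icc k l, p j) ^ (1 - δ) ≤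
      ∑ j ∈ Finset.Icc (k + m) l, p j := by
  obtain ⟨N, rfl⟩ := Int.le.dest hkz
  have hmN : m ≤ N := by
    have : (m : ℝ) ≤ N := by
      push_cast at hm
      have : (0 : ℝ) ≤ N := by positivity
      nlinarith
    exact_mod_cast this
  set F : ℤ → ℝ := fun n => ∑ j ∈ Finset.Icc n l, p j with hF
  have hFpos : ∀ n, k ≤ n → n ≤ l → 0 < F n := by
    intro n h1 h2
    refine Finset.sum_pos' (fun i _ => h0 i) ⟨n, by simp [h2], hp n h1 h2⟩
  have hchord := concave_seq_chord (fun i => Real.log (F (k + i))) N (by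
    intro i hi
    have h1 := tail_lc h0 h l (k + i) (by omega)
    have p0 := hFpos (k + i) (by omega) (by omega)
    have p1 := hFpos (k + i + 1) (by omega) (by omega)
    have p2 := hFpos (k + i + 2) (by omega) (by omega)
    have h2 := Real.log_le_log (mul_pos p0 p2) h1
    rw [Real.log_mul p0.ne' p2.ne', Real.log_pow] at h2
    push_cast at h2 ⊢
    rw [← add_assoc, ← add_assoc]
    exact h2) m hmN
  simp only [Nat.cast_zero, add_zero] at hchord
  have q0 := hFpos k le_rfl (by omega)
  have qm := hFpos (k + m) (by omega) (by omega)
  have qN := hFpos (k + N) (by omega) (by omega)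
  have hle : F (k + N) ≤ F k := by
    refine Finset.sum_le_sum_of_subset_of_nonneg (Finset.Icc_subset_Icc (by omega) le_rfl) ?_
    intro i _ _; exact h0 i
  have hlog := Real.log_le_log qN hle
  change F (k + N) ^ δ * F k ^ (1 - δ) ≤ F (k + m)
  rw [← Real.log_le_log_iff (by positivity) qm, Real.log_mul (by positivity) (by positivity),
    Real.log_rpow qN, Real.log_rpow q0]
  rcases Nat.eq_zero_or_pos N with hN | hN
  · subst hN
    have : m = 0 := by omega
    subst this
    simp; linarith
  have hN' : (0 : ℝ) < N := by exact_mod_cast hN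
  push_cast at hm
  have hm' : (m : ℝ) ≤ δ * N := by linarith
  refine le_of_mul_le_mul_left ?_ hN'
  nlinarith [mul_nonneg (sub_nonneg.2 hm') (sub_nonneg.2 hlog)]

/-- Abel-type inequality for antitone weights. -/
lemma abel_antitone (z l : ℤ) (p f : ℤ → ℝ) (h0 : ∀ n, 0 ≤ p n)
    (hp : ∀ n, z ≤ n → n + 1 ≤ l → p (n + 1) ≤ p n)
    (hf : ∀ y, z ≤ y → y ≤ l → 0 ≤ ∑ n ∈ Finset.Icc z y, f n) (hzl : z ≤ l) :
    0 ≤ ∑ n ∈ Finset.Icc z l, f n * p n := by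
  have key : ∀ y, z ≤ y → y ≤ l →
      (∑ n ∈ Finset.Icc z y, f n) * p y ≤ ∑ n ∈ Finset.Icc z y, f n * p n := by
    intro y hy
    induction y, hy using Int.leInduction with
    | base => intro _; simp
    | succ y hy ih =>
      intro hyl
      have h1 := ih (by omega)
      rw [← Finset.insert_Icc_right_eq_Icc_add_one (by omega), Finset.sum_insert (by simp),
        Finset.sum_insert (by simp)]
      have h2 := mul_le_mul_of_nonneg_left (hp y hy hyl) (hf y hy (by omega))
      linarith
  exact (mul_nonneg (hf l hzl le_rfl) (h0 l)).trans (key l hzl le_rfl)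

lemma scalar_ineq (K T b δ : ℝ) (hb : 0 ≤ b) (hbT : b ≤ T) (hTK : T ≤ K) (hδ0 : 0 < δ)
    (hδ1 : δ < 1) :
    b ^ δ * K ^ (1 - δ) ≤ T ^ δ * K ^ (1 - δ) - δ * (T - b) := by
  have hT : 0 ≤ T := hb.trans hbT
  have h1 := Real.geom_mean_le_arith_mean2_weighted hδ0.le (by linarith : 0 ≤ 1 - δ) hb hT (by ring)
  have h2 : T ^ δ * T ^ (1 - δ) = T := by
    rw [← Real.rpow_add_of_nonneg hT hδ0.le (by linarith)]; simp
  have h3 : T ^ (1 - δ) ≤ K ^ (1 - δ) := Real.rpow_le_rpow hT hTK (by linarith)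
  have h4 : b ^ δ ≤ T ^ δ := Real.rpow_le_rpow hb hbT hδ0.le
  nlinarith [mul_nonneg (sub_nonneg.2 h3) (sub_nonneg.2 h4)]

open Classical in
lemma right_count (A B : Set ℤ) (hBA : B ⊆ A) (δ : ℝ) (z l : ℤ) (hz : z ∈ B)
    (hR : ∀ w ∈ B, z ≤ w → ∀ y, y ≤ l → w ≤ y →
      (((Finset.Ioc w y).filter (fun n => n ∉ A)).card : ℝ) ≤ δ * (y - w)) (y : ℤ) (hzy : z ≤ y)
    (hyl : y ≤ l) :
    0 ≤ ∑ n ∈ Finset.Icc z y, (δ * (if n ∈ B then 0 else 1) - (if n ∈ A then 0 else 1)) := by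
  set f : ℤ → ℝ := fun n => δ * (if n ∈ B then 0 else 1) - (if n ∈ A then 0 else 1) with hf
  have hfB : ∀ n ∈ B, f n = 0 := by
    intro n hn; simp [hf, hn, hBA hn]
  have step : ∀ w y : ℤ, w ∈ B → z ≤ w → w ≤ y → y ≤ l → (∀ n, w < n → n ≤ y → n ∉ B) →
      0 ≤ ∑ n ∈ Finset.Icc z w, f n → 0 ≤ ∑ n ∈ Finset.Icc z y, f n := by
    intro w y hw hzw hwy hyl hno hs
    have hsplit : Finset.Icc z y = Finset.Icc z w ∪ Finset.Ioc w y := by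
      ext n; simp only [Finset.mem_Icc, Finset.mem_union, Finset.mem_Ioc]; omega
    have hdis : Disjoint (Finset.Icc z w) (Finset.Ioc w y) := by
      rw [Finset.disjoint_left]; intro n; simp only [Finset.mem_Icc, Finset.mem_Ioc]; omega
    rw [hsplit, Finset.sum_union hdis]
    have h2 : ∑ n ∈ Finset.Ioc w y, f n =
        δ * (y - w) - (((Finset.Ioc w y).filter (fun n => n ∉ A)).card : ℝ) := by
      have h3 : ∀ n ∈ Finset.Ioc w y, f n = δ - (if n ∉ A then 1 else 0) := by
        intro n hn
        rw [Finset.mem_Ioc] at hn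
        have := hno n hn.1 hn.2
        by_cases hA : n ∈ A <;> simp [hf, this, hA]
      rw [Finset.sum_congr rfl h3, Finset.sum_sub_distrib, Finset.sum_boole]
      have h5 : ((y - w).toNat : ℝ) = (y : ℝ) - w := by
        have : ((y - w).toNat : ℤ) = y - w := Int.toNat_of_nonneg (by omega)
        exact_mod_cast congrArg (fun t : ℤ => (t : ℝ)) this
      simp only [Finset.sum_const, Int.card_Ioc, nsmul_eq_mul, h5]
      ring
    have h4 := hR w hw hzw y hyl hwy
    linarith
  have main : ∀ y, z ≤ y → y ≤ l → ∃ w ∈ B, z ≤ w ∧ w ≤ y ∧ (∀ n, w < n → n ≤ y → n ∉ B) ∧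
      0 ≤ ∑ n ∈ Finset.Icc z w, f n := by
    intro y hy
    induction y, hy using Int.leInduction with
    | base =>
      intro _
      exact ⟨z, hz, le_rfl, le_rfl, fun n h1 h2 => by omega, by simp [hfB z hz]⟩
    | succ y hy ih =>
      intro hyl
      obtain ⟨w, hw, hzw, hwy, hno, hs⟩ := ih (by omega)
      by_cases hyB : y + 1 ∈ B
      · refine ⟨y + 1, hyB, by omega, le_rfl, fun n h1 h2 => by omega, ?_⟩
        rw [← Finset.insert_Icc_right_eq_Icc_add_one (by omega), Finset.sum_insert (by simp),
          hfB _ hyB, zero_add]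
        exact step w y hw hzw hwy (by omega) hno hs
      · refine ⟨w, hw, hzw, by omega, ?_, hs⟩
        intro n h1 h2
        rcases eq_or_ne n (y + 1) with rfl | h3
        · exact hyB
        · exact hno n h1 (by omega)
  obtain ⟨w, hw, hzw, hwy, hno, hs⟩ := main y hzy hyl
  exact step w y hw hzw hwy hyl hno hs

lemma left_rearr (p : ℤ → ℝ) (k l : ℤ)
    (hanti : ∀ x y, k ≤ x → x ≤ y → y ≤ l → p y ≤ p x) (C : Finset ℤ)
    (hC : C ⊆ Finset.Icc k l) (hm : k + C.card ≤ l) :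
    ∑ n ∈ C, p n ≤ ∑ n ∈ Finset.Ico k (k + C.card), p n := by
  set m := C.card with hmdef
  set Q := Finset.Ico k (k + (m : ℤ)) with hQ
  have hcard : Q.card = C.card := by simp [hQ, hmdef]
  have h1 : ∑ n ∈ C \ Q, p n ≤ ∑ n ∈ C \ Q, p (k + m) := by
    refine Finset.sum_le_sum fun n hn => ?_
    rw [Finset.mem_sdiff, hQ, Finset.mem_Ico] at hn
    have := Finset.mem_Icc.1 (hC hn.1)
    exact hanti _ _ (by omega) (by omega) (by omega)
  have h2 : ∑ n ∈ Q \ C, p (k + m) ≤ ∑ n ∈ Q \ C, p n := by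
    refine Finset.sum_le_sum fun n hn => ?_
    rw [Finset.mem_sdiff, hQ, Finset.mem_Ico] at hn
    exact hanti _ _ (by omega) (by omega) (by omega)
  have h3 : (C \ Q).card = (Q \ C).card := Finset.card_sdiff_comm hcard.symm
  rw [Finset.sum_const, h3, ← Finset.sum_const] at h1
  rw [← Finset.sum_inter_add_sum_sdiff C Q, ← Finset.sum_inter_add_sum_sdiff Q C,
    Finset.inter_comm Q C]
  linarith

open Classical in
lemma antitone_case (p : ℤ → ℝ) (h0 : ∀ n, 0 ≤ p n) (h : StrongLC p) (k l : ℤ)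
    (hp : ∀ n, k ≤ n → n ≤ l → 0 < p n)
    (hanti : ∀ x y, k ≤ x → x ≤ y → y ≤ l → p y ≤ p x)
    (A B : Set ℤ) (hBA : B ⊆ A) (δ : ℝ) (hδ0 : 0 < δ) (hδ1 : δ < 1)
    (hR : ∀ w ∈ B, k ≤ w → ∀ y, y ≤ l → w ≤ y →
      (((Finset.Ioc w y).filter (fun n => n ∉ A)).card : ℝ) ≤ δ * (y - w))
    (hL : ∀ w ∈ B, w ≤ l → ∀ y, k ≤ y → y ≤ w →
      (((Finset.Ico y w).filter (fun n => n ∉ A)).card : ℝ) ≤ δ * (w - y)) :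
    (∑ n ∈ (Finset.Icc k l).filter (fun n => n ∈ B), p n) ^ δ *
      (∑ n ∈ Finset.Icc k l, p n) ^ (1 - δ) ≤
      ∑ n ∈ (Finset.Icc k l).filter (fun n => n ∈ A), p n := by
  rcases Finset.eq_empty_or_nonempty ((Finset.Icc k l).filter (fun n => n ∈ B)) with hE | hE
  · rw [hE, Finset.sum_empty, Real.zero_rpow hδ0.ne', zero_mul]
    exact Finset.sum_nonneg fun n _ => h0 n
  obtain ⟨z, hz, hzmin⟩ : ∃ z ∈ (Finset.Icc k l).filter (fun n => n ∈ B),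
      ∀ w ∈ (Finset.Icc k l).filter (fun n => n ∈ B), z ≤ w :=
    ⟨_, Finset.min'_mem _ hE, fun w hw => Finset.min'_le _ w hw⟩
  simp only [Finset.mem_filter, Finset.mem_Icc] at hz hzmin
  obtain ⟨⟨hkz, hzl⟩, hzB⟩ := hz
  set C := (Finset.Ico k z).filter (fun n => n ∉ A) with hC
  have hm := hL z hzB hzl k le_rfl hkz
  rw [← hC] at hm
  have hmz : k + C.card ≤ z := by
    have h1 := Finset.card_filter_le (Finset.Ico k z) (fun n => n ∉ A)
    rw [← hC, Int.card_Ico] at h1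
    omega
  have hIntv := tail_interp h0 h k l z hkz hzl hp C.card δ hδ0 hδ1 hm
  have hre := left_rearr p k l hanti C (by
    intro n hn
    simp only [hC, Finset.mem_filter, Finset.mem_Ico] at hn
    rw [Finset.mem_Icc]; omega) (by omega)
  have habel := abel_antitone z l p
    (fun n => δ * (if n ∈ B then 0 else 1) - (if n ∈ A then 0 else 1)) h0
    (fun n h1 h2 => hanti _ _ (by omega) (by omega) h2)
    (fun y h1 h2 => right_count A B hBA δ z l hzB
      (fun w hw hzw => hR w hw (by omega)) y h1 h2) hzl
  -- sums
  set T := ∑ j ∈ Finset.Icc z l, p j with hT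
  set S := ∑ j ∈ Finset.Icc k l, p j with hS
  set b := ∑ n ∈ (Finset.Icc k l).filter (fun n => n ∈ B), p n with hb
  set a := ∑ n ∈ (Finset.Icc k l).filter (fun n => n ∈ A), p n with ha
  have hbz : b = ∑ n ∈ (Finset.Icc z l).filter (fun n => n ∈ B), p n := by
    rw [hb]
    congr 1
    ext n
    simp only [Finset.mem_filter, Finset.mem_Icc]
    constructor
    · rintro ⟨h1, h2⟩
      exact ⟨⟨hzmin n ⟨h1, h2⟩, h1.2⟩, h2⟩
    · rintro ⟨h1, h2⟩
      exact ⟨⟨by omega, h1.2⟩, h2⟩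
  have hcr : ∑ n ∈ (Finset.Icc z l).filter (fun n => n ∉ A), p n ≤ δ * (T - b) := by
    have e1 : T - b = ∑ n ∈ (Finset.Icc z l).filter (fun n => n ∉ B), p n := by
      rw [hbz, hT, ← Finset.sum_filter_add_sum_filter_not (Finset.Icc z l) (fun n => n ∈ B) p]
      ring
    rw [e1, Finset.sum_filter, Finset.sum_filter, Finset.mul_sum, ← sub_nonneg,
      ← Finset.sum_sub_distrib]
    refine habel.trans_eq (Finset.sum_congr rfl fun n _ => ?_)
    by_cases h1 : n ∈ A <;> by_cases h2 : n ∈ B <;> simp [h1, h2]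
    ring
  have hsplit : ∀ x, k ≤ x → x ≤ l → S = ∑ n ∈ Finset.Ico k x, p n + ∑ n ∈ Finset.Icc x l, p n := by
    intro x h1 h2
    rw [hS, ← Finset.sum_union]
    · congr 1
      ext n; simp only [Finset.mem_Icc, Finset.mem_union, Finset.mem_Ico]; omega
    · rw [Finset.disjoint_left]; intro n; simp only [Finset.mem_Icc, Finset.mem_Ico]; omega
  have haS : S = a + (∑ n ∈ C, p n + ∑ n ∈ (Finset.Icc z l).filter (fun n => n ∉ A), p n) := by
    rw [hS, ha, ← Finset.sum_filter_add_sum_filter_not (Finset.Icc k l) (fun n => n ∈ A) p]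
    congr 1
    rw [hC, ← Finset.sum_union]
    · congr 1
      ext n
      simp only [Finset.mem_Icc, Finset.mem_union, Finset.mem_Ico, Finset.mem_filter]
      constructor
      · rintro ⟨h1, h2⟩
        by_cases h3 : n < z
        · exact Or.inl ⟨by omega, h2⟩
        · exact Or.inr ⟨by omega, h2⟩
      · rintro (⟨h1, h2⟩ | ⟨h1, h2⟩)
        · exact ⟨by omega, h2⟩
        · exact ⟨by omega, h2⟩
    · rw [Finset.disjoint_left]; intro n
      simp only [Finset.mem_Icc, Finset.mem_Ico, Finset.mem_filter]
      omega
  have hs1 := hsplit (k + C.card) (by omega) (by omega)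
  have hb0 : 0 ≤ b := Finset.sum_nonneg fun n _ => h0 n
  have hbT : b ≤ T := by
    rw [hbz]
    exact Finset.sum_le_sum_of_subset_of_nonneg (Finset.filter_subset _ _) fun n _ _ => h0 n
  have hTS : T ≤ S :=
    Finset.sum_le_sum_of_subset_of_nonneg (Finset.Icc_subset_Icc hkz le_rfl) fun n _ _ => h0 n
  have hsc := scalar_ineq S T b δ hb0 hbT hTS hδ0 hδ1
  linarith

open Classical in
lemma monotone_case (p : ℤ → ℝ) (h0 : ∀ n, 0 ≤ p n) (h : StrongLC p) (k l : ℤ)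
    (hp : ∀ n, k ≤ n → n ≤ l → 0 < p n)
    (hmono : ∀ x y, k ≤ x → x ≤ y → y ≤ l → p x ≤ p y)
    (A B : Set ℤ) (hBA : B ⊆ A) (δ : ℝ) (hδ0 : 0 < δ) (hδ1 : δ < 1)
    (hR : ∀ w ∈ B, k ≤ w → ∀ y, y ≤ l → w ≤ y →
      (((Finset.Ioc w y).filter (fun n => n ∉ A)).card : ℝ) ≤ δ * (y - w))
    (hL : ∀ w ∈ B, w ≤ l → ∀ y, k ≤ y → y ≤ w →
      (((Finset.Ico y w).filter (fun n => n ∉ A)).card : ℝ) ≤ δ * (w - y)) :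
    (∑ n ∈ (Finset.Icc k l).filter (fun n => n ∈ B), p n) ^ δ *
      (∑ n ∈ Finset.Icc k l, p n) ^ (1 - δ) ≤
      ∑ n ∈ (Finset.Icc k l).filter (fun n => n ∈ A), p n := by
  have key := antitone_case (fun n => p (-n)) (fun n => h0 _) (by
      intro a b hab
      have := h (-(b + 1)) (-(a + 1)) (by omega)
      rw [show -(b + 1) + 1 = -b by ring, show -(a + 1) + 1 = -a by ring] at this
      simp only
      linarith) (-l) (-k) (fun n h1 h2 => hp _ (by omega) (by omega))
      (fun x y h1 h2 h3 => hmono _ _ (by omega) (by omega) (by omega))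
      {n | -n ∈ A} {n | -n ∈ B} (fun n hn => hBA hn) δ hδ0 hδ1 (by
        intro w hw h1 y h2 h3
        have := hL (-w) hw (by omega) (-y) (by omega) (by omega)
        push_cast at this
        rw [show -(w : ℝ) - -(y : ℝ) = y - w by ring] at this
        refine le_trans (le_of_eq ?_) this
        congr 1
        refine Finset.card_bij (fun n _ => -n) ?_ (fun a _ b _ hab => by simpa using hab) ?_
        · intro n hn
          simp only [Finset.mem_filter, Finset.mem_Ioc, Finset.mem_Ico, Set.mem_ofPred_eq] at hn ⊢
          exact ⟨by omega, hn.2⟩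
        · intro n hn
          simp only [Finset.mem_filter, Finset.mem_Ico] at hn
          refine ⟨-n, ?_, by simp⟩
          simp only [Finset.mem_filter, Finset.mem_Ioc, Set.mem_ofPred_eq, neg_neg]
          exact ⟨by omega, hn.2⟩) (by
        intro w hw h1 y h2 h3
        have := hR (-w) hw (by omega) (-y) (by omega) (by omega)
        push_cast at this
        rw [show -(y : ℝ) - -(w : ℝ) = w - y by ring] at this
        refine le_trans (le_of_eq ?_) this
        congr 1
        refine Finset.card_bij (fun n _ => -n) ?_ (fun a _ b _ hab => by simpa using hab) ?_
        · intro n hn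
          simp only [Finset.mem_filter, Finset.mem_Ioc, Finset.mem_Ico, Set.mem_ofPred_eq] at hn ⊢
          exact ⟨by omega, hn.2⟩
        · intro n hn
          simp only [Finset.mem_filter, Finset.mem_Ioc] at hn
          refine ⟨-n, ?_, by simp⟩
          simp only [Finset.mem_filter, Finset.mem_Ico, Set.mem_ofPred_eq, neg_neg]
          exact ⟨by omega, hn.2⟩)
  have hrefl : ∀ f : ℤ → ℝ, ∑ n ∈ Finset.Icc (-l) (-k), f (-n) = ∑ n ∈ Finset.Icc k l, f n := by
    intro f
    refine Finset.sum_bij (fun n _ => -n) ?_ (fun a _ b _ hab => by simpa using hab) ?_ ?_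
    · intro n hn; rw [Finset.mem_Icc] at hn ⊢; omega
    · intro n hn; rw [Finset.mem_Icc] at hn
      exact ⟨-n, by rw [Finset.mem_Icc]; omega, by simp⟩
    · intro n _; rfl
  have e1 := hrefl p
  have e2 := hrefl (fun n => if n ∈ A then p n else 0)
  have e3 := hrefl (fun n => if n ∈ B then p n else 0)
  rw [Finset.sum_filter, Finset.sum_filter] at key ⊢
  simp only [Set.mem_ofPred_eq] at key
  rw [e1, e2, e3] at key
  exact key

open Classical in
lemma affine_case (q : ℤ → ℝ) (h0 : ∀ n, 0 ≤ q n) (h : StrongLC q) (s : Finset ℤ)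
    (hs : ∀ n, n ∉ s → q n = 0) (hne : ∃ n, 0 < q n)
    (hno : ∀ c, 0 < q (c - 1) → 0 < q (c + 1) → q c ^ 2 ≤ q (c - 1) * q (c + 1))
    (A B : Set ℤ) (hBA : B ⊆ A) (δ : ℝ) (hδ0 : 0 < δ) (hδ1 : δ < 1)
    (hR : ∀ w ∈ B, 0 < q w → ∀ y, 0 < q y → w ≤ y →
      (((Finset.Ioc w y).filter (fun n => n ∉ A)).card : ℝ) ≤ δ * (y - w))
    (hL : ∀ w ∈ B, 0 < q w → ∀ y, 0 < q y → y ≤ w →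
      (((Finset.Ico y w).filter (fun n => n ∉ A)).card : ℝ) ≤ δ * (w - y)) :
    (∑ n ∈ s.filter (fun n => n ∈ B), q n) ^ δ * (∑ n ∈ s, q n) ^ (1 - δ) ≤
      ∑ n ∈ s.filter (fun n => n ∈ A), q n := by
  have hcon := h.contig h0
  have hmem : ∀ n, 0 < q n → n ∈ s := by
    intro n hn; by_contra hc; rw [hs n hc] at hn; exact lt_irrefl _ hn
  set t := s.filter (fun n => 0 < q n) with ht
  have htn : t.Nonempty := by
    obtain ⟨n, hn⟩ := hne
    exact ⟨n, by simp [ht, hn, hmem n hn]⟩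
  obtain ⟨k, hk, hkmin⟩ : ∃ k ∈ t, ∀ n ∈ t, k ≤ n :=
    ⟨_, Finset.min'_mem _ htn, fun w hw => Finset.min'_le _ w hw⟩
  obtain ⟨l, hl, hlmax⟩ : ∃ l ∈ t, ∀ n ∈ t, n ≤ l :=
    ⟨_, Finset.max'_mem _ htn, fun w hw => Finset.le_max' _ w hw⟩
  have hk' : 0 < q k := (Finset.mem_filter.1 hk).2
  have hl' : 0 < q l := (Finset.mem_filter.1 hl).2
  have hpos : ∀ n, k ≤ n → n ≤ l → 0 < q n := fun n h1 h2 => hcon k n l h1 h2 hk' hl'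
  have hsub : Finset.Icc k l ⊆ s := by
    intro n hn; rw [Finset.mem_Icc] at hn; exact hmem n (hpos n hn.1 hn.2)
  have hzero : ∀ n, n ∉ Finset.Icc k l → q n = 0 := by
    intro n hn
    by_contra hc
    have hq : 0 < q n := lt_of_le_of_ne (h0 n) (Ne.symm hc)
    have hnt : n ∈ t := by simp [ht, hq, hmem n hq]
    exact hn (Finset.mem_Icc.2 ⟨hkmin n hnt, hlmax n hnt⟩)
  have e1 : ∑ n ∈ Finset.Icc k l, q n = ∑ n ∈ s, q n :=
    Finset.sum_subset hsub fun n _ hn => hzero n hn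
  have e2 : ∀ D : Set ℤ, ∑ n ∈ (Finset.Icc k l).filter (fun n => n ∈ D), q n =
      ∑ n ∈ s.filter (fun n => n ∈ D), q n := by
    intro D
    rw [Finset.sum_filter, Finset.sum_filter]
    exact Finset.sum_subset hsub fun n _ hn => by simp [hzero n hn]
  rw [← e1, ← e2, ← e2]
  have hR' : ∀ w ∈ B, k ≤ w → ∀ y, y ≤ l → w ≤ y →
      (((Finset.Ioc w y).filter (fun n => n ∉ A)).card : ℝ) ≤ δ * (y - w) :=
    fun w hw h1 y h2 h3 => hR w hw (hpos w h1 (by omega)) y (hpos y (by omega) h2) h3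
  have hL' : ∀ w ∈ B, w ≤ l → ∀ y, k ≤ y → y ≤ w →
      (((Finset.Ico y w).filter (fun n => n ∉ A)).card : ℝ) ≤ δ * (w - y) :=
    fun w hw h1 y h2 h3 => hL w hw (hpos w (by omega) h1) y (hpos y h2 (by omega)) h3
  rcases le_or_gt (q (k + 1)) (q k) with hcase | hcase
  · refine antitone_case q h0 h k l hpos ?_ A B hBA δ hδ0 hδ1 hR' hL'
    have hstep : ∀ n, k ≤ n → n + 1 ≤ l → q (n + 1) ≤ q n := by
      intro n hn
      induction n, hn using Int.leInduction with
      | base => intro _; exact hcase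
      | succ n hn ih =>
        intro h1
        have h2 := ih (by omega)
        have h3 := h.locally_lc (n + 1)
        rw [add_sub_cancel_right] at h3
        have h4 := hpos n hn (by omega)
        have h5 := hpos (n + 1) (by omega) (by omega)
        refine le_of_mul_le_mul_left ?_ h4
        nlinarith
    intro x y hx hxy
    induction y, hxy using Int.leInduction with
    | base => intro _; exact le_rfl
    | succ y hy ih =>
      intro h1
      exact (hstep y (by omega) h1).trans (ih (by omega))
  · refine monotone_case q h0 h k l hpos ?_ A B hBA δ hδ0 hδ1 hR' hL'
    have hstep : ∀ n, k ≤ n → n + 1 ≤ l → q n ≤ q (n + 1) := by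
      intro n hn
      induction n, hn using Int.leInduction with
      | base => intro _; exact hcase.le
      | succ n hn ih =>
        intro h1
        have h2 := ih (by omega)
        have h4 := hpos n hn (by omega)
        have h5 := hpos (n + 1) (by omega) (by omega)
        have h6 := hpos (n + 1 + 1) (by omega) (by omega)
        have h3 := hno (n + 1) (by rw [add_sub_cancel_right]; exact h4) h6
        rw [add_sub_cancel_right] at h3
        refine le_of_mul_le_mul_left ?_ h4
        nlinarith
    intro x y hx hxy
    induction y, hxy using Int.leInduction with
    | base => intro _; exact le_rfl
    | succ y hy ih =>
      intro h1
      exact (ih (by omega)).trans (hstep y (by omega) h1)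

/-- The kinked affine function used for perturbation. -/
noncomputable def kink (c : ℤ) (x : Fin 3 → ℝ) (n : ℤ) : ℝ :=
  x 0 + x 1 * ((max (c - n) 0 : ℤ) : ℝ) + x 2 * ((max (n - c) 0 : ℤ) : ℝ)

lemma kink_local (c : ℤ) (x : Fin 3 → ℝ) (n : ℤ) (hn : n ≠ c) :
    kink c x (n - 1) + kink c x (n + 1) = 2 * kink c x n := by
  unfold kink
  rcases lt_or_gt_of_ne hn with h | h
  · rw [max_eq_left (by omega : 0 ≤ c - (n - 1)), max_eq_left (by omega : 0 ≤ c - (n + 1)),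
      max_eq_left (by omega : 0 ≤ c - n), max_eq_right (by omega : n - 1 - c ≤ 0),
      max_eq_right (by omega : n + 1 - c ≤ 0), max_eq_right (by omega : n - c ≤ 0)]
    push_cast; ring
  · rw [max_eq_right (by omega : c - (n - 1) ≤ 0), max_eq_right (by omega : c - (n + 1) ≤ 0),
      max_eq_right (by omega : c - n ≤ 0), max_eq_left (by omega : 0 ≤ n - 1 - c),
      max_eq_left (by omega : 0 ≤ n + 1 - c), max_eq_left (by omega : 0 ≤ n - c)]
    push_cast; ring

lemma perturb_lc {p : ℤ → ℝ} (h0 : ∀ n, 0 ≤ p n) (h : StrongLC p) (s : Finset ℤ)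
    (hs : ∀ n, n ∉ s → p n = 0) (c : ℤ) (w : ℤ → ℝ)
    (hw : ∀ n, n ≠ c → w (n - 1) + w (n + 1) = 2 * w n) (t : ℝ)
    (ht : ∀ n ∈ s, 0 < 1 + t * w n)
    (hc : p (c - 1) * (1 + t * w (c - 1)) * (p (c + 1) * (1 + t * w (c + 1))) <
      (p c * (1 + t * w c)) ^ 2) :
    (∀ n, 0 ≤ p n * (1 + t * w n)) ∧ StrongLC (fun n => p n * (1 + t * w n)) := by
  have hmem : ∀ n, 0 < p n → n ∈ s := by
    intro n hn; by_contra hc; rw [hs n hc] at hn; exact lt_irrefl _ hn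
  have hnn : ∀ n, 0 ≤ p n * (1 + t * w n) := by
    intro n
    rcases (h0 n).eq_or_lt with h1 | h1
    · rw [← h1, zero_mul]
    · exact mul_nonneg h1.le (ht n (hmem n h1)).le
  have hiff : ∀ n, 0 < p n * (1 + t * w n) ↔ 0 < p n := by
    intro n
    constructor
    · intro h1
      rcases (h0 n).eq_or_lt with h2 | h2
      · rw [← h2, zero_mul] at h1; exact absurd h1 (lt_irrefl _)
      · exact h2
    · intro h1; exact mul_pos h1 (ht n (hmem n h1))
  refine ⟨hnn, strongLC_of_local hnn ?_ ?_⟩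
  · intro n
    rcases eq_or_ne n c with rfl | hn
    · exact hc.le
    rcases (h0 (n - 1)).eq_or_lt with h1 | h1
    · simp only [← h1, zero_mul]; positivity
    rcases (h0 (n + 1)).eq_or_lt with h2 | h2
    · simp only [← h2, zero_mul, mul_zero]; positivity
    have u1 := ht _ (hmem _ h1)
    have u2 := ht _ (hmem _ h2)
    have h3 := h.locally_lc n
    have h4 : (1 + t * w (n - 1)) * (1 + t * w (n + 1)) ≤ (1 + t * w n) ^ 2 := by
      have h5 : 1 + t * w n = ((1 + t * w (n - 1)) + (1 + t * w (n + 1))) / 2 := by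
        linear_combination (-t / 2) * hw n hn
      rw [h5]
      nlinarith [sq_nonneg ((1 + t * w (n - 1)) - (1 + t * w (n + 1)))]
    calc p (n - 1) * (1 + t * w (n - 1)) * (p (n + 1) * (1 + t * w (n + 1)))
        = (p (n - 1) * p (n + 1)) * ((1 + t * w (n - 1)) * (1 + t * w (n + 1))) := by ring
      _ ≤ p n ^ 2 * (1 + t * w n) ^ 2 :=
          mul_le_mul h3 h4 (mul_pos u1 u2).le (sq_nonneg _)
      _ = _ := by ring
  · intro a b d hab hbd ha hd
    simp only [hiff] at *
    exact h.contig h0 a b d hab hbd ha hd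

open Classical in
lemma exists_perturb {p : ℤ → ℝ} (h0 : ∀ n, 0 ≤ p n) (h : StrongLC p) (s : Finset ℤ)
    (hs : ∀ n, n ∉ s → p n = 0) (c : ℤ) (hc1 : 0 < p (c - 1)) (hc2 : 0 < p (c + 1))
    (hc : p (c - 1) * p (c + 1) < p c ^ 2) (B : Set ℤ) :
    ∃ v : ℤ → ℝ, (∃ n ∈ s, v n ≠ 0) ∧ (∀ n, p n = 0 → v n = 0) ∧ ∑ n ∈ s, v n = 0 ∧
      ∑ n ∈ s.filter (fun n => n ∈ B), v n = 0 ∧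
      (∀ n, 0 ≤ p n + v n) ∧ StrongLC (fun n => p n + v n) ∧
      (∀ n, 0 ≤ p n - v n) ∧ StrongLC (fun n => p n - v n) := by
  have hmem : ∀ n, 0 < p n → n ∈ s := by
    intro n hn; by_contra hc; rw [hs n hc] at hn; exact lt_irrefl _ hn
  -- linear algebra
  obtain ⟨x, hx, hx1, hx2⟩ : ∃ x : Fin 3 → ℝ, x ≠ 0 ∧ ∑ n ∈ s, p n * kink c x n = 0 ∧
      ∑ n ∈ s.filter (fun n => n ∈ B), p n * kink c x n = 0 := by
    have hadd : ∀ (x y : Fin 3 → ℝ) n, kink c (x + y) n = kink c x n + kink c y n := by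
      intro x y n; simp only [kink, Pi.add_apply]; ring
    have hsmul : ∀ (r : ℝ) (y : Fin 3 → ℝ) n, kink c (r • y) n = r * kink c y n := by
      intro x y n; simp only [kink, Pi.smul_apply, smul_eq_mul]; ring
    let f : (Fin 3 → ℝ) →ₗ[ℝ] ℝ × ℝ :=
      { toFun := fun x => (∑ n ∈ s, p n * kink c x n,
          ∑ n ∈ s.filter (fun n => n ∈ B), p n * kink c x n)
        map_add' := by
          intro x y
          simp only [hadd, mul_add, Finset.sum_add_distrib, Prod.mk_add_mk]
        map_smul' := by
          intro r x
          simp only [hsmul, RingHom.id_apply, Prod.smul_mk, smul_eq_mul, Finset.mul_sum]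
          congr 1 <;> exact Finset.sum_congr rfl fun n _ => by ring }
    have hker : LinearMap.ker f ≠ ⊥ := LinearMap.ker_ne_bot_of_finrank_lt (by simp)
    obtain ⟨x, hxk, hx⟩ := Submodule.exists_mem_ne_zero_of_ne_bot hker
    rw [LinearMap.mem_ker] at hxk
    exact ⟨x, hx, congrArg Prod.fst hxk, congrArg Prod.snd hxk⟩
  set w := kink c x with hwdef
  have hpc : 0 < p c := by
    rcases (h0 c).eq_or_lt with h1 | h1
    · rw [← h1] at hc
      have := mul_pos hc1 hc2
      norm_num at hc
      linarith
    · exact h1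
  have hwne : ∃ n, 0 < p n ∧ w n ≠ 0 := by
    by_contra hcon
    push Not at hcon
    have a0 := hcon c hpc
    have a1 := hcon _ hc1
    have a2 := hcon _ hc2
    simp [hwdef, kink] at a0
    simp [hwdef, kink, a0] at a1
    simp [hwdef, kink, a0] at a2
    apply hx
    ext i
    fin_cases i
    · exact a0
    · exact a1
    · exact a2
  have hev : ∀ᶠ t in nhds (0 : ℝ), (∀ n ∈ s, 0 < 1 + t * w n) ∧
      p (c - 1) * (1 + t * w (c - 1)) * (p (c + 1) * (1 + t * w (c + 1))) <
        (p c * (1 + t * w c)) ^ 2 := by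
    refine Filter.Eventually.and ?_ ?_
    · rw [Filter.eventually_all_finset]
      intro n _
      have hcont : Continuous fun t : ℝ => 1 + t * w n := by fun_prop
      exact hcont.continuousAt.eventually_const_lt (by simp)
    · have g1 : Continuous fun t : ℝ =>
        p (c - 1) * (1 + t * w (c - 1)) * (p (c + 1) * (1 + t * w (c + 1))) := by fun_prop
      have g2 : Continuous fun t : ℝ => (p c * (1 + t * w c)) ^ 2 := by fun_prop
      exact g1.continuousAt.eventually_lt g2.continuousAt (by simpa using hc)
  have hev2 : ∀ᶠ t in nhds (0 : ℝ), (∀ n ∈ s, 0 < 1 + (-t) * w n) ∧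
      p (c - 1) * (1 + (-t) * w (c - 1)) * (p (c + 1) * (1 + (-t) * w (c + 1))) <
        (p c * (1 + (-t) * w c)) ^ 2 := by
    have : Filter.Tendsto (fun t : ℝ => -t) (nhds 0) (nhds 0) := by
      simpa using (continuous_neg (G := ℝ)).tendsto 0
    exact this.eventually hev
  obtain ⟨t, ⟨⟨ht1, ht2⟩, ⟨ht3, ht4⟩⟩, htpos⟩ :=
    (((hev.and hev2).filter_mono (nhdsWithin_le_nhds (s := Set.Ioi 0))).and
      self_mem_nhdsWithin).exists
  have htpos : 0 < t := htpos
  have r1 := perturb_lc h0 h s hs c w (kink_local c x) t ht1 ht2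
  have r2 := perturb_lc h0 h s hs c w (kink_local c x) (-t) ht3 ht4
  have f1 : (fun n => p n * (1 + t * w n)) = fun n => p n + t * (p n * w n) := by
    ext n; ring
  have f2 : (fun n => p n * (1 + (-t) * w n)) = fun n => p n - t * (p n * w n) := by
    ext n; ring
  refine ⟨fun n => t * (p n * w n), ?_, ?_, ?_, ?_, ?_, ?_, ?_, ?_⟩
  · obtain ⟨n, h1, h2⟩ := hwne
    exact ⟨n, hmem n h1, mul_ne_zero htpos.ne' (mul_ne_zero h1.ne' h2)⟩
  · intro n hn; simp [hn]
  · rw [← Finset.mul_sum, hx1, mul_zero]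
  · rw [← Finset.mul_sum, hx2, mul_zero]
  · intro n; rw [← congrFun f1 n]; exact r1.1 n
  · rw [← f1]; exact r1.2
  · intro n; rw [← congrFun f2 n]; exact r2.1 n
  · rw [← f2]; exact r2.2

open Classical in
lemma finite_case (p : ℤ → ℝ) (h0 : ∀ n, 0 ≤ p n) (h : StrongLC p) (s : Finset ℤ)
    (hs : ∀ n, n ∉ s → p n = 0) (hsum : ∑ n ∈ s, p n = 1)
    (A B : Set ℤ) (hBA : B ⊆ A) (δ : ℝ) (hδ0 : 0 < δ) (hδ1 : δ < 1)
    (hR : ∀ w ∈ B, 0 < p w → ∀ y, 0 < p y → w ≤ y →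
      (((Finset.Ioc w y).filter (fun n => n ∉ A)).card : ℝ) ≤ δ * (y - w))
    (hL : ∀ w ∈ B, 0 < p w → ∀ y, 0 < p y → y ≤ w →
      (((Finset.Ico y w).filter (fun n => n ∉ A)).card : ℝ) ≤ δ * (w - y)) :
    (∑ n ∈ s.filter (fun n => n ∈ B), p n) ^ δ ≤ ∑ n ∈ s.filter (fun n => n ∈ A), p n := by
  set β := ∑ n ∈ s.filter (fun n => n ∈ B), p n with hβ
  let S : Set (ℤ → ℝ) := {q | (∀ n, 0 ≤ q n) ∧ (∀ n, p n = 0 → q n = 0) ∧ StrongLC q ∧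
    ∑ n ∈ s, q n = 1 ∧ ∑ n ∈ s.filter (fun n => n ∈ B), q n = β}
  have hpS : p ∈ S := ⟨h0, fun n hn => hn, h, hsum, rfl⟩
  have hle1 : ∀ q ∈ S, ∀ n, q n ≤ 1 := by
    rintro q ⟨q0, q1, -, q3, -⟩ n
    by_cases hn : n ∈ s
    · rw [← q3]; exact Finset.single_le_sum (fun i _ => q0 i) hn
    · rw [q1 n (hs n hn)]; norm_num
  have hclosed : IsClosed S := by
    have c1 : IsClosed {q : ℤ → ℝ | ∀ n, 0 ≤ q n} := by
      simp only [Set.ofPred_forall]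
      exact isClosed_iInter fun n => isClosed_le continuous_const (continuous_apply n)
    have c2 : IsClosed {q : ℤ → ℝ | ∀ n, p n = 0 → q n = 0} := by
      simp only [Set.ofPred_forall]
      exact isClosed_iInter fun n => isClosed_iInter fun _ =>
        isClosed_eq (continuous_apply n) continuous_const
    have c3 : IsClosed {q : ℤ → ℝ | StrongLC q} := by
      simp only [StrongLC, Set.ofPred_forall]
      exact isClosed_iInter fun a => isClosed_iInter fun b => isClosed_iInter fun _ =>
        isClosed_le (by fun_prop) (by fun_prop)
    have c4 : IsClosed {q : ℤ → ℝ | ∑ n ∈ s, q n = 1} :=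
      isClosed_eq (by fun_prop) continuous_const
    have c5 : IsClosed {q : ℤ → ℝ | ∑ n ∈ s.filter (fun n => n ∈ B), q n = β} :=
      isClosed_eq (by fun_prop) continuous_const
    exact c1.inter (c2.inter (c3.inter (c4.inter c5)))
  have hcomp : IsCompact S := by
    refine IsCompact.of_isClosed_subset
      (isCompact_univ_pi (s := fun _ : ℤ => Set.Icc (0 : ℝ) 1) fun _ => isCompact_Icc) hclosed ?_
    intro q hq n _
    exact ⟨hq.1 n, hle1 q hq n⟩
  refine le_of_forall_pos_le_add fun ε hε => ?_
  let g : (ℤ → ℝ) → ℝ := fun q =>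
    ε * ∑ n ∈ s, q n ^ 2 - ∑ n ∈ s.filter (fun n => n ∈ A), q n
  have hg : Continuous g := by fun_prop
  obtain ⟨q, hqS, hqmax⟩ := hcomp.exists_isMaxOn ⟨p, hpS⟩ hg.continuousOn
  have hqmax' : ∀ r ∈ S, g r ≤ g q := fun r hr => hqmax hr
  obtain ⟨q0, q1, q2, q3, q4⟩ := hqS
  have hqs : ∀ n, n ∉ s → q n = 0 := fun n hn => q1 n (hs n hn)
  have hno : ∀ c, 0 < q (c - 1) → 0 < q (c + 1) → q c ^ 2 ≤ q (c - 1) * q (c + 1) := by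
    intro c hc1 hc2
    by_contra hlt
    push Not at hlt
    obtain ⟨v, ⟨m, hms, hvm⟩, hv0, hv1, hv2, hv3, hv4, hv5, hv6⟩ :=
      exists_perturb q0 q2 s hqs c hc1 hc2 hlt B
    have m1 : g (fun n => q n + v n) ≤ g q := hqmax' _
      ⟨hv3, fun n hn => by simp [q1 n hn, hv0 n (q1 n hn)], hv4,
        by rw [Finset.sum_add_distrib, q3, hv1, add_zero],
        by rw [Finset.sum_add_distrib, q4, hv2, add_zero]⟩
    have m2 : g (fun n => q n - v n) ≤ g q := hqmax' _
      ⟨hv5, fun n hn => by simp [q1 n hn, hv0 n (q1 n hn)], hv6,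
        by rw [Finset.sum_sub_distrib, q3, hv1, sub_zero],
        by rw [Finset.sum_sub_distrib, q4, hv2, sub_zero]⟩
    have m3 : g (fun n => q n + v n) + g (fun n => q n - v n) =
        2 * g q + 2 * ε * ∑ n ∈ s, v n ^ 2 := by
      have e1 : ∑ n ∈ s, (q n + v n) ^ 2 + ∑ n ∈ s, (q n - v n) ^ 2 =
          2 * ∑ n ∈ s, q n ^ 2 + 2 * ∑ n ∈ s, v n ^ 2 := by
        rw [Finset.mul_sum, Finset.mul_sum, ← Finset.sum_add_distrib, ← Finset.sum_add_distrib]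
        exact Finset.sum_congr rfl fun n _ => by ring
      simp only [g, Finset.sum_add_distrib, Finset.sum_sub_distrib]
      linear_combination ε * e1
    have m4 : 0 < ∑ n ∈ s, v n ^ 2 :=
      Finset.sum_pos' (fun n _ => sq_nonneg _) ⟨m, hms, by positivity⟩
    have m5 := mul_pos hε m4
    linarith
  have hqpos : ∀ n, 0 < q n → 0 < p n := by
    intro n hn
    refine lt_of_le_of_ne (h0 n) fun hc => ?_
    rw [q1 n hc.symm] at hn; exact lt_irrefl _ hn
  have hne : ∃ n, 0 < q n := by
    by_contra hc
    push Not at hc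
    have : ∑ n ∈ s, q n ≤ 0 := Finset.sum_nonpos fun n _ => hc n
    linarith
  have hfin := affine_case q q0 q2 s hqs hne hno A B hBA δ hδ0 hδ1
    (fun w hw h1 y h2 => hR w hw (hqpos w h1) y (hqpos y h2))
    (fun w hw h1 y h2 => hL w hw (hqpos w h1) y (hqpos y h2))
  rw [q3, q4, Real.one_rpow, mul_one] at hfin
  have hgp := hqmax' p hpS
  have hsq : ∑ n ∈ s, q n ^ 2 ≤ 1 := by
    rw [← q3]
    refine Finset.sum_le_sum fun n _ => ?_
    have := hle1 q ⟨q0, q1, q2, q3, q4⟩ n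
    nlinarith [q0 n]
  have hsq2 : 0 ≤ ∑ n ∈ s, p n ^ 2 := Finset.sum_nonneg fun n _ => sq_nonneg _
  simp only [g] at hgp
  nlinarith [mul_nonneg hε.le hsq2, mul_le_mul_of_nonneg_left hsq hε.le]

open Classical in
lemma finite_case' (p : ℤ → ℝ) (h0 : ∀ n, 0 ≤ p n) (h : StrongLC p) (s : Finset ℤ)
    (hs : ∀ n, n ∉ s → p n = 0)
    (A B : Set ℤ) (hBA : B ⊆ A) (δ : ℝ) (hδ0 : 0 < δ) (hδ1 : δ < 1)
    (hR : ∀ w ∈ B, 0 < p w → ∀ y, 0 < p y → w ≤ y →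
      (((Finset.Ioc w y).filter (fun n => n ∉ A)).card : ℝ) ≤ δ * (y - w))
    (hL : ∀ w ∈ B, 0 < p w → ∀ y, 0 < p y → y ≤ w →
      (((Finset.Ico y w).filter (fun n => n ∉ A)).card : ℝ) ≤ δ * (w - y)) :
    (∑ n ∈ s.filter (fun n => n ∈ B), p n) ^ δ * (∑ n ∈ s, p n) ^ (1 - δ) ≤
      ∑ n ∈ s.filter (fun n => n ∈ A), p n := by
  have hM0 : 0 ≤ ∑ n ∈ s, p n := Finset.sum_nonneg fun n _ => h0 n
  rcases hM0.eq_or_lt with hM | hM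
  · rw [← hM, Real.zero_rpow (by linarith), mul_zero]
    exact Finset.sum_nonneg fun n _ => h0 n
  set M := ∑ n ∈ s, p n with hMdef
  have hpos : ∀ n, 0 < p n / M → 0 < p n := fun n hn => by
    rwa [div_pos_iff_of_pos_right hM] at hn
  have key := finite_case (fun n => p n / M) (fun n => div_nonneg (h0 n) hM.le) (by
      intro a b hab
      have := h a b hab
      simp only
      rw [div_mul_div_comm, div_mul_div_comm]
      gcongr) s (fun n hn => by simp [hs n hn])
      (by rw [← Finset.sum_div, ← hMdef, div_self hM.ne']) A B hBA δ hδ0 hδ1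
      (fun w hw h1 y h2 => hR w hw (hpos w h1) y (hpos y h2))
      (fun w hw h1 y h2 => hL w hw (hpos w h1) y (hpos y h2))
  rw [← Finset.sum_div, ← Finset.sum_div,
    Real.div_rpow (Finset.sum_nonneg fun n _ => h0 n) hM.le] at key
  have e : M ^ (1 - δ) = M / M ^ δ := by rw [Real.rpow_sub hM, Real.rpow_one]
  rw [e]
  rw [le_div_iff₀ hM] at key
  calc _ = (∑ n ∈ s.filter (fun n => n ∈ B), p n) ^ δ / M ^ δ * M := by ring
    _ ≤ _ := key

open Classical in
lemma count_aux (A : Set ℤ) (δ : ℝ) (T : Finset ℤ) (D : Set ℤ) (hD : D = ↑T)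
    (h : (1 - δ) * (D.ncard : ℝ) ≤ ((A ∩ D).ncard : ℝ)) :
    ((T.filter (fun n => n ∉ A)).card : ℝ) ≤ δ * T.card := by
  subst hD
  have e : A ∩ (↑T : Set ℤ) = ↑(T.filter (fun n => n ∈ A)) := by
    ext n; simp [and_comm]
  rw [e, Set.ncard_coe_finset, Set.ncard_coe_finset] at h
  have h2 : ((T.filter (fun n => n ∈ A)).card : ℝ) + (T.filter (fun n => n ∉ A)).card = T.card := by
    exact_mod_cast Finset.card_filter_add_card_filter_not (s := T) (fun n => n ∈ A)
  linarith

open Classical in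
lemma window_case (p : ℤ → ℝ) (h0 : ∀ n, 0 ≤ p n) (h : StrongLC p)
    (K A : Set ℤ) (hK : IsIntervalZ K) (hA : A ⊆ K)
    (δ : ℝ) (hδ0 : 0 < δ) (hδ1 : δ < 1) (a b : ℤ) :
    (∑ n ∈ Finset.Icc a b, (dilationInterior K A δ).indicator p n) ^ δ *
      (∑ n ∈ Finset.Icc a b, K.indicator p n) ^ (1 - δ) ≤
      ∑ n ∈ Finset.Icc a b, A.indicator p n := by
  set B := dilationInterior K A δ with hB
  have hBA : B ⊆ A := fun z hz => hz.1
  set q : ℤ → ℝ := (K ∩ Set.Icc a b).indicator p with hq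
  have hq0 : ∀ n, 0 ≤ q n := fun n => Set.indicator_nonneg (fun n _ => h0 n) n
  have hqK : ∀ n, 0 < q n → n ∈ K ∩ Set.Icc a b := by
    intro n hn
    by_contra hc
    rw [hq, Set.indicator_of_notMem hc] at hn
    exact lt_irrefl _ hn
  have hqLC : StrongLC q := by
    intro x y hxy
    rcases (hq0 x).eq_or_lt with h1 | h1
    · rw [← h1, zero_mul]; exact mul_nonneg (hq0 _) (hq0 _)
    rcases (hq0 (y + 1)).eq_or_lt with h2 | h2
    · rw [← h2, mul_zero]; exact mul_nonneg (hq0 _) (hq0 _)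
    have m1 := hqK _ h1
    have m2 := hqK _ h2
    have m3 : x + 1 ∈ K ∩ Set.Icc a b :=
      ⟨hK x (x + 1) (y + 1) (by omega) (by omega) m1.1 m2.1,
        by have := m1.2.1; omega, by have := m2.2.2; omega⟩
    have m4 : y ∈ K ∩ Set.Icc a b :=
      ⟨hK x y (y + 1) (by omega) (by omega) m1.1 m2.1,
        by have := m1.2.1; omega, by have := m2.2.2; omega⟩
    simp only [hq, Set.indicator_of_mem m1, Set.indicator_of_mem m2, Set.indicator_of_mem m3,
      Set.indicator_of_mem m4]
    exact h x y hxy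
  have hIcc : ∀ x y, x ∈ K → y ∈ K → Set.Icc x y ⊆ K := fun x y hx hy n hn =>
    hK x n y hn.1 hn.2 hx hy
  have hIntv : ∀ x y : ℤ, IsIntervalZ (Set.Icc x y) := fun x y u v w h1 h2 h3 h4 =>
    ⟨h3.1.trans h1, h2.trans h4.2⟩
  have hcast : ∀ x y : ℤ, x ≤ y → ((y - x).toNat : ℝ) = (y : ℝ) - x := by
    intro x y hxy
    have : ((y - x).toNat : ℤ) = y - x := Int.toNat_of_nonneg (by omega)
    exact_mod_cast congrArg (fun t : ℤ => (t : ℝ)) this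
  have key := finite_case' q hq0 hqLC (Finset.Icc a b) (by
      intro n hn
      rw [hq, Set.indicator_of_notMem]
      intro hc
      exact hn (Finset.mem_Icc.2 hc.2)) A B hBA δ hδ0 hδ1 (by
      intro w hw _ y hy hwy
      have h1 := hw.2 (Set.Icc w y) (hIntv w y) (Set.finite_Icc w y)
        (hIcc w y (hA hw.1) (hqK y hy).1) ⟨le_rfl, hwy⟩
      have h2 := count_aux A δ (Finset.Ioc w y) _ (by
        ext n; simp only [Set.mem_sdiff, Set.mem_Icc, Set.mem_singleton_iff, Finset.coe_Ioc,
          Set.mem_Ioc]; omega) h1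
      rwa [Int.card_Ioc, hcast w y hwy] at h2) (by
      intro w hw _ y hy hyw
      have h1 := hw.2 (Set.Icc y w) (hIntv y w) (Set.finite_Icc y w)
        (hIcc y w (hqK y hy).1 (hA hw.1)) ⟨hyw, le_rfl⟩
      have h2 := count_aux A δ (Finset.Ico y w) _ (by
        ext n; simp only [Set.mem_sdiff, Set.mem_Icc, Set.mem_singleton_iff, Finset.coe_Ico,
          Set.mem_Ico]; omega) h1
      rwa [Int.card_Ico, hcast y w hyw] at h2)
  have e : ∀ D : Set ℤ, D ⊆ K → ∑ n ∈ (Finset.Icc a b).filter (fun n => n ∈ D), q n =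
      ∑ n ∈ Finset.Icc a b, D.indicator p n := by
    intro D hD
    rw [Finset.sum_filter]
    refine Finset.sum_congr rfl fun n hn => ?_
    rw [Finset.mem_Icc] at hn
    by_cases hnD : n ∈ D
    · have : n ∈ K ∩ Set.Icc a b := ⟨hD hnD, hn⟩
      rw [if_pos hnD, hq, Set.indicator_of_mem this, Set.indicator_of_mem hnD]
    · rw [if_neg hnD, Set.indicator_of_notMem hnD]
  have e2 : ∑ n ∈ Finset.Icc a b, q n = ∑ n ∈ Finset.Icc a b, K.indicator p n := by
    refine Finset.sum_congr rfl fun n hn => ?_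
    rw [Finset.mem_Icc] at hn
    by_cases hnK : n ∈ K
    · have : n ∈ K ∩ Set.Icc a b := ⟨hnK, hn⟩
      rw [hq, Set.indicator_of_mem this, Set.indicator_of_mem hnK]
    · rw [hq, Set.indicator_of_notMem (fun hc => hnK hc.1), Set.indicator_of_notMem hnK]
  rw [e A hA, e B (hBA.trans hA), e2] at key
  exact key

lemma tendsto_window (p : ℤ → ℝ) (hp : Summable p) (D : Set ℤ) :
    Filter.Tendsto (fun N : ℕ => ∑ n ∈ Finset.Icc (-(N : ℤ)) N, D.indicator p n)
      Filter.atTop (nhds (measOf p D)) := by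
  have h1 : HasSum (D.indicator p) (measOf p D) := (hp.indicator D).hasSum
  refine h1.comp (Filter.tendsto_atTop_finset_of_monotone ?_ ?_)
  · intro m n hmn
    exact Finset.Icc_subset_Icc (by omega) (by omega)
  · intro x
    exact ⟨x.natAbs, by rw [Finset.mem_Icc]; omega⟩

/-- Dilation inequality: if `μ` is log-concave (with p.m.f. `p`) and `A ⊆ K` with
`K ⊆ ℤ` an interval, then `μ(A) ≥ μ(A_δ)^δ · μ(K)^{1−δ}` for every `δ ∈ (0,1)`. -/
theorem dilation_inequality (p : ℤ → ℝ) (hp : IsLogConcavePMF p)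
    (K A : Set ℤ) (hK : IsIntervalZ K) (hA : A ⊆ K)
    (δ : ℝ) (hδ0 : 0 < δ) (hδ1 : δ < 1) :
    measOf p (dilationInterior K A δ) ^ δ * measOf p K ^ (1 - δ) ≤ measOf p A := by
  have hlc := strongLC_of_local hp.1 hp.2.2.2.1 hp.2.2.2.2
  have hs := hp.2.1
  refine le_of_tendsto_of_tendsto'
    (((tendsto_window p hs (dilationInterior K A δ)).rpow_const (Or.inr hδ0.le)).mul
      ((tendsto_window p hs K).rpow_const (Or.inr (by linarith))))
    (tendsto_window p hs A) ?_
  intro N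
  exact window_case p hp.1 hlc K A hK hA δ hδ0 hδ1 _ _
end
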